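/- arXiv:2206.04955 — 2 statements merged into one kernel-verified Lean document; each statement's English description precedes it below -/
import Mathlib

section
/- Let X be a finite linear L-algebra (an L-algebra whose natural order x ≤ y ⟺ x·y = e is total). If x ≤ y, then x·z ≥ y·z for all z ∈ X. -/
/-- The L-algebra axioms for a binary operation `op` with logical unit `e`. -/
def IsLAlgebra {X : Type*} (op : X → X → X) (e : X) : Prop :=
  (∀ x, op e x = x) ∧ (∀ x, op x e = e) ∧ (∀ x, op x x = e) ∧
  (∀ x y z, op (op x y) (op x z) = op (op y x) (op y z)) ∧
  (∀ x y, op x y = e → op y x = e → x = y)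

/-!
For `x ≤ y` the cycloid equation reads `(y·x)·(y·z) = x·z`. Hence `y·z ≤ x·z` is an instance of
`a ≤ b·a`. The same identity shows that `b·` is strictly increasing on `{a | a ≤ b}`. If `b·a < a`
for some `a ≤ b`, the iterates `a > b·a > b·(b·a) > ⋯` would therefore descend forever, so
well-foundedness and totality give `a ≤ b·a`.
-/

namespace IsLAlgebra

variable {X : Type*} {op : X → X → X} {e a b c : X}

theorem unit_op (hL : IsLAlgebra op e) (x : X) : op e x = x := hL.1 x

theorem op_unit (hL : IsLAlgebra op e) (x : X) : op x e = e := hL.2.1 x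

theorem op_self (hL : IsLAlgebra op e) (x : X) : op x x = e := hL.2.2.1 x

theorem cycloid (hL : IsLAlgebra op e) (x y z : X) :
    op (op x y) (op x z) = op (op y x) (op y z) := hL.2.2.2.1 x y z

theorem le_antisymm (hL : IsLAlgebra op e) (hab : op a b = e) (hba : op b a = e) : a = b :=
  hL.2.2.2.2 a b hab hba

theorem op_op_op_of_le (hL : IsLAlgebra op e) (hab : op a b = e) (c : X) :
    op (op b a) (op b c) = op a c := by
  rw [hL.cycloid, hab, hL.unit_op]

theorem le_trans (hL : IsLAlgebra op e) (hab : op a b = e) (hbc : op b c = e) : op a c = e := by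
  rw [← hL.op_op_op_of_le hab, hbc, hL.op_unit]

theorem op_le_op_left (hL : IsLAlgebra op e) (hab : op a b = e) (c : X) :
    op (op c a) (op c b) = e := by
  rw [hL.cycloid, hab, hL.op_unit]

/-- The natural order of an L-algebra, used to express well-foundedness of its strict part. It
depends on the proof of the axioms, so it is not an instance, and `a ≤ b` is written `op a b = e`
in statements. -/
abbrev partialOrder (hL : IsLAlgebra op e) : PartialOrder X where
  le a b := op a b = e
  le_refl := hL.op_self
  le_trans _ _ _ := hL.le_trans
  le_antisymm _ _ := hL.le_antisymm

theorem op_lt_op_left_of_le (hL : IsLAlgebra op e) (hab : hL.partialOrder.lt a b)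
    (hbc : op b c = e) : hL.partialOrder.lt (op c a) (op c b) := by
  obtain ⟨a_le_b, not_b_le_a⟩ := hab
  refine ⟨hL.op_le_op_left a_le_b c, fun cb_le_ca => not_b_le_a ?_⟩
  exact (hL.op_op_op_of_le hbc a).symm.trans cb_le_ca

theorem not_op_lt_self_of_le (hL : IsLAlgebra op e) (hwf : WellFounded hL.partialOrder.lt)
    (hab : op a b = e) : ¬ hL.partialOrder.lt (op b a) a := by
  induction a using hwf.induction with
  | _ a ih =>
    intro hlt
    exact ih (op b a) hlt (hL.le_trans hlt.1 hab) (hL.op_lt_op_left_of_le hlt hab)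

theorem le_op (hL : IsLAlgebra op e) (htotal : ∀ x y, op x y = e ∨ op y x = e)
    (hwf : WellFounded hL.partialOrder.lt) (a b : X) : op a (op b a) = e := by
  rcases htotal b a with b_le_a | a_le_b
  · rw [b_le_a, hL.op_unit]
  · by_contra not_a_le_ba
    have ba_le_a : op (op b a) a = e := (htotal a (op b a)).resolve_left not_a_le_ba
    exact hL.not_op_lt_self_of_le hwf a_le_b ⟨ba_le_a, not_a_le_ba⟩

end IsLAlgebra

theorem linear_L_algebra_antitone_general
    {X : Type*} {op : X → X → X} {e : X} (hL : IsLAlgebra op e)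
    (htotal : ∀ x y, op x y = e ∨ op y x = e) (hwf : WellFounded hL.partialOrder.lt)
    {x y : X} (hxy : op x y = e) (z : X) : op (op y z) (op x z) = e := by
  rw [← hL.op_op_op_of_le hxy z]
  exact hL.le_op htotal hwf (op y z) (op y x)

/-- In a finite linear L-algebra (natural order `x ≤ y ⟺ x·y = e` is total),
if `x ≤ y` then `x·z ≥ y·z` for all `z`. -/
theorem linear_L_algebra_antitone
    {X : Type*} [Fintype X] (op : X → X → X) (e : X)
    (hL : IsLAlgebra op e)
    (htotal : ∀ x y, op x y = e ∨ op y x = e)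
    (x y : X) (hxy : op x y = e) :   -- x ≤ y
    ∀ z : X, op (op y z) (op x z) = e := by
  let _ := hL.partialOrder
  exact linear_L_algebra_antitone_general hL htotal wellFounded_lt hxy
end

section
/- For n ≥ 2 and 1 ≤ m ≤ n−1, the number of L-algebra structures on the chain L_n = {x_0 > x_1 > … > x_{n−1}} (with natural order equal to this total order and logical unit x_0) whose smallest invariant element is x_m equals binom(n−2, m−1)·B(m−1), where B(k) denotes the k-th Bell number, i.e. the number of equivalence relations on a k-element set. -/
/-!
In a linear L-algebra on `n` elements, written with the order of indices, the cycloid equation for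
`x < y < z` reads `(x · y) · (x · z) = y · z`; it makes every row `x · _` strictly increasing on the
indices above `x`, so that `x · y ≤ y`. Let `m` be the largest invariant index. The operation
restricts to the indices below `m`, the rows of these fix every index from `m` on, and
`m · z < z` for all `z > m`, because the first index violating this would be invariant. The cycloid
equation `y · z = (m · y) · (m · z)` then determines the rows beyond `m` recursively, so the
structure amounts to an arbitrary one on `m` elements together with a strictly increasing map from
`{m + 1, …, n - 1}` to `{1, …, n - 2}`, for which there are `binom(n - 2, m - 1)` choices. Summing
over `m` shows that the number of structures on `k + 1` elements satisfies the recursion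
`B(k + 1) = ∑ j, binom(k, j) * B(j)` of the Bell numbers.
-/

section Setoid

variable {α β : Type*}

/-- Transport of equivalence relations along a bijection. -/
def setoidCongr (e : α ≃ β) : Setoid α ≃ Setoid β where
  toFun s := s.comap e.symm
  invFun s := s.comap e
  left_inv s := by ext; simp [Setoid.comap_rel]
  right_inv s := by ext; simp [Setoid.comap_rel]

theorem finite_setoid [Finite α] : Finite (Setoid α) :=
  .of_injective Setoid.classes fun _ _ => Setoid.classes_inj.2

/-- The elements of `α` outside the class of `none`. -/
noncomputable def unrelatedToNone [Fintype α] (r : Setoid (Option α)) : Finset α :=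
  open Classical in {a | ¬ r none (some a)}

theorem mem_unrelatedToNone [Fintype α] {r : Setoid (Option α)} {a : α} :
    a ∈ unrelatedToNone r ↔ ¬ r none (some a) := by
  simp [unrelatedToNone]

/-- The equivalence relation on `Option α` that restricts to `s` on `S` and whose remaining
elements form one class together with `none`, encoded as the kernel of the map to
`Option (Quotient s)`. -/
noncomputable def setoidAdjoinNone (S : Finset α) (s : Setoid S) : Setoid (Option α) :=
  open Classical in Setoid.ker fun x : Option α =>
    x.bind fun a => if h : a ∈ S then some (Quotient.mk s ⟨a, h⟩) else none

theorem setoidAdjoinNone_none_some {S : Finset α} {s : Setoid S} {a : α} :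
    setoidAdjoinNone S s none (some a) ↔ a ∉ S := by
  rw [setoidAdjoinNone, Setoid.ker_def]
  simp

theorem setoidAdjoinNone_some_some {S : Finset α} {s : Setoid S} {a b : α} (ha : a ∈ S)
    (hb : b ∈ S) : setoidAdjoinNone S s (some a) (some b) ↔ s ⟨a, ha⟩ ⟨b, hb⟩ := by
  rw [setoidAdjoinNone, Setoid.ker_def]
  simp only [Option.bind_some, dif_pos ha, dif_pos hb, Option.some.injEq]
  exact Quotient.eq

theorem unrelatedToNone_setoidAdjoinNone [Fintype α] (S : Finset α) (s : Setoid S) :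
    unrelatedToNone (setoidAdjoinNone S s) = S := by
  ext a
  rw [mem_unrelatedToNone, setoidAdjoinNone_none_some, not_not]

theorem setoidAdjoinNone_comap_some [Fintype α] (r : Setoid (Option α)) :
    setoidAdjoinNone (unrelatedToNone r) (r.comap fun a => some a.1) = r := by
  set S := unrelatedToNone r
  set q := setoidAdjoinNone S (r.comap fun a => some a.1)
  have none_some (a : α) : q none (some a) ↔ r none (some a) := by
    rw [setoidAdjoinNone_none_some, mem_unrelatedToNone, not_not]
  ext x y
  rcases x with _ | a <;> rcases y with _ | b
  · exact iff_of_true (q.refl _) (r.refl _)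
  · exact none_some b
  · rw [q.comm', none_some a, r.comm']
  · by_cases ha : r none (some a)
    · have ha' := (none_some a).2 ha
      exact ⟨fun h => r.trans (r.symm ha) ((none_some b).1 (q.trans ha' h)),
        fun h => q.trans (q.symm ha') ((none_some b).2 (r.trans ha h))⟩
    by_cases hb : r none (some b)
    · have hb' := (none_some b).2 hb
      exact iff_of_false
        (fun h => ha ((none_some a).1 (q.trans hb' (q.symm h))))
        (fun h => ha (r.trans hb (r.symm h)))
    · exact setoidAdjoinNone_some_some (mem_unrelatedToNone.2 ha) (mem_unrelatedToNone.2 hb)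

/-- Equivalence relations on `Option α` in which the class of `none` has complement `S`
correspond to equivalence relations on `S`. -/
noncomputable def setoidOptionFiberEquiv [Fintype α] (S : Finset α) :
    {r : Setoid (Option α) // unrelatedToNone r = S} ≃ Setoid S where
  toFun r := r.1.comap fun a => some a.1
  invFun s := ⟨setoidAdjoinNone S s, unrelatedToNone_setoidAdjoinNone S s⟩
  left_inv := by
    rintro ⟨r, rfl⟩
    exact Subtype.ext (setoidAdjoinNone_comap_some r)
  right_inv s := by
    ext a b
    exact setoidAdjoinNone_some_some a.2 b.2

theorem card_setoid_option [Fintype α] :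
    Nat.card (Setoid (Option α)) = ∑ S : Finset α, Nat.card (Setoid S) := by
  have (S : Finset α) : Finite (Setoid S) := finite_setoid
  rw [← Nat.card_sigma]
  exact Nat.card_congr ((Equiv.sigmaFiberEquiv unrelatedToNone).symm.trans
    (Equiv.sigmaCongrRight setoidOptionFiberEquiv))

theorem bell_succ_eq_sum_range (k : ℕ) :
    (k + 1).bell = ∑ j ∈ Finset.range (k + 1), k.choose j * j.bell := by
  rw [Nat.bell_succ', ← Finset.Nat.sum_antidiagonal_swap,
    Finset.Nat.sum_antidiagonal_eq_sum_range_succ_mk]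
  refine Finset.sum_congr rfl fun j hj => ?_
  rw [Prod.fst_swap, Prod.snd_swap, Nat.choose_symm (Finset.mem_range_succ_iff.1 hj)]

theorem card_setoid_fin (k : ℕ) : Nat.card (Setoid (Fin k)) = k.bell := by
  induction k using Nat.strong_induction_on with
  | _ k ih =>
  rcases k with _ | k
  · rw [Nat.bell_zero, Nat.card_eq_one_iff_unique]
    exact ⟨⟨fun _ _ => Setoid.ext fun x => x.elim0⟩, ⟨⊥⟩⟩
  · have card_of_finset (S : Finset (Fin k)) : Nat.card (Setoid S) = S.card.bell := by
      rw [Nat.card_congr (setoidCongr S.equivFin),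
        ih _ (Nat.lt_succ_of_le (card_finset_fin_le S))]
    rw [Nat.card_congr (setoidCongr (finSuccEquiv k)), card_setoid_option,
      bell_succ_eq_sum_range, Finset.sum_congr rfl fun S _ => card_of_finset S,
      ← Finset.powerset_univ, Finset.sum_powerset_apply_card Nat.bell]
    simp

end Setoid

section StrictMono

/-- The maps `s → t` that are strictly increasing, encoded as total functions with the junk
value `0` outside `s`. -/
def strictMonoMaps {α β : Type*} [Preorder α] [Preorder β] [Zero β] (s : Finset α)
    (t : Finset β) : Set (α → β) :=
  {g | StrictMonoOn g s ∧ Set.MapsTo g s t ∧ ∀ z ∉ s, g z = 0}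

theorem card_orderEmbedding {α β : Type*} [LinearOrder α] [Fintype α] [LinearOrder β] :
    Nat.card (α ↪o β) = (Nat.card β).choose (Fintype.card α) := by
  rw [Nat.card_congr (((Fintype.orderIsoFinOfCardEq α rfl).symm.orderEmbeddingCongr
    (OrderIso.refl β)).trans Set.powersetCard.ofFinEmbEquiv), Set.powersetCard.card]

/-- Strictly increasing maps `s → t` as order embeddings. -/
noncomputable def strictMonoMapsEquiv {α β : Type*} [LinearOrder α] [LinearOrder β] [Zero β]
    (s : Finset α) (t : Finset β) : strictMonoMaps s t ≃ (s ↪o t) where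
  toFun g := OrderEmbedding.ofStrictMono (fun z => ⟨g.1 z, g.2.2.1 z.2⟩)
    fun y z hyz => g.2.1 y.2 z.2 hyz
  invFun h := ⟨fun z => if hz : z ∈ s then h ⟨z, hz⟩ else 0,
    fun y hy z hz hyz => by
      simp only [Finset.mem_coe.1 hy, Finset.mem_coe.1 hz, dite_true]
      exact h.strictMono hyz,
    fun z hz => by
      simp only [Finset.mem_coe.1 hz, dite_true]
      exact (h ⟨z, hz⟩).2,
    fun z hz => dif_neg hz⟩
  left_inv g := by
    ext z
    by_cases hz : z ∈ s
    · exact dif_pos hz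
    · exact (dif_neg hz).trans (g.2.2.2 z hz).symm
  right_inv h := by
    ext z
    exact dif_pos z.2

theorem ncard_strictMonoMaps {α β : Type*} [LinearOrder α] [LinearOrder β] [Zero β]
    (s : Finset α) (t : Finset β) : (strictMonoMaps s t).ncard = t.card.choose s.card := by
  rw [← Nat.card_coe_set_eq, Nat.card_congr (strictMonoMapsEquiv s t), card_orderEmbedding,
    Nat.card_eq_fintype_card, Fintype.card_coe, Fintype.card_coe]

-- `g` embeds the `n - z` points of `[z, n)` into `[g z, N)`.
theorem add_sub_le_of_strictMonoOn_Ioo {g : ℕ → ℕ} {a n N z : ℕ} (hg : StrictMonoOn g (Set.Ioo a n))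
    (hN : ∀ y ∈ Set.Ioo a n, g y < N) (hz : z ∈ Set.Ioo a n) : g z + (n - z) ≤ N := by
  have hsub : Set.Ico z n ⊆ Set.Ioo a n := fun y hy => ⟨hz.1.trans_le hy.1, hy.2⟩
  have hcard : (Finset.Ico z n).card ≤ (Finset.Ico (g z) N).card := by
    refine Finset.card_le_card_of_injOn g (fun y hy => ?_) ?_
    · rw [Finset.coe_Ico] at hy ⊢
      exact ⟨hg.monotoneOn hz (hsub hy) hy.1, hN y (hsub hy)⟩
    · rw [Finset.coe_Ico]
      exact hg.injOn.mono hsub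
  rw [Nat.card_Ico, Nat.card_Ico] at hcard
  have := hN z hz
  omega

end StrictMono

/-- An L-algebra structure on the chain with indices `0, …, n - 1`, where larger indices are
smaller elements and `0` is the logical unit, encoded as a function on `ℕ` with the junk value
`0` outside the chain. The cycloid equation is required only for `x < y < z`, where it takes the
form below; its other instances follow. -/
structure IsChainLOp (n : ℕ) (f : ℕ → ℕ → ℕ) : Prop where
  eq_zero {a b : ℕ} : b ≤ a ∨ n ≤ b → f a b = 0
  mem_Ioo {a b : ℕ} : a < b → b < n → f a b ∈ Set.Ioo 0 n
  zero_left {b : ℕ} : b < n → f 0 b = b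
  cycloid {x y z : ℕ} : x < y → y < z → z < n → f (f x y) (f x z) = f y z

/-- The indices below `n` of the invariant elements: `y < q` says that the element with index
`y` lies above the one with index `q`. -/
def invariantIndices (n : ℕ) (f : ℕ → ℕ → ℕ) : Set ℕ :=
  {q | q < n ∧ ∀ y < q, f y q = q}

/-- The L-algebra structures on the chain of length `n`. -/
def chainLOps (n : ℕ) : Set (ℕ → ℕ → ℕ) := {f | IsChainLOp n f}

/-- The L-algebra structures on the chain of length `n` whose smallest invariant element has
index `m`. -/
def chainLOpsWithInvariant (n m : ℕ) : Set (ℕ → ℕ → ℕ) :=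
  {f | IsChainLOp n f ∧ IsGreatest (invariantIndices n f) m}

/-- The maps that occur as the row `b ↦ f m b` of the smallest invariant element `m` of a chain
operation `f` of length `n`. -/
abbrev admissibleRows (n m : ℕ) : Set (ℕ → ℕ) :=
  strictMonoMaps (Finset.Ioo m n) (Finset.Ioo 0 (n - 1))

theorem apply_lt_of_mem_admissibleRows {n m z : ℕ} {g : ℕ → ℕ} (hg : g ∈ admissibleRows n m)
    (hmz : m < z) (hz : z < n) : g z < z := by
  obtain ⟨hmono, hmaps, -⟩ := hg
  rw [Finset.coe_Ioo] at hmono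
  have := add_sub_le_of_strictMonoOn_Ioo hmono
    (fun y hy => (Finset.mem_Ioo.1 (hmaps (Finset.mem_Ioo.2 hy))).2) ⟨hmz, hz⟩
  omega

theorem apply_lt_apply_of_mem_admissibleRows {n m y z : ℕ} {g : ℕ → ℕ}
    (hg : g ∈ admissibleRows n m) (hmy : m < y) (hyz : y < z) (hz : z < n) : g y < g z :=
  hg.1 (Finset.mem_Ioo.2 (by omega)) (Finset.mem_Ioo.2 (by omega)) hyz

namespace IsChainLOp

variable {n m : ℕ} {f : ℕ → ℕ → ℕ}

theorem pos_iff (hf : IsChainLOp n f) {a b : ℕ} (hb : b < n) : 0 < f a b ↔ a < b := by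
  refine ⟨fun h => ?_, fun h => (hf.mem_Ioo h hb).1⟩
  by_contra hab
  exact h.ne' (hf.eq_zero (.inl (not_lt.1 hab)))

-- If `f x z ≤ f x y`, then the left side of the cycloid equation is `0`, but `f y z` is not.
theorem strictMonoOn (hf : IsChainLOp n f) (x : ℕ) : StrictMonoOn (f x) (Set.Ioo x n) := by
  intro y hy z hz hyz
  by_contra h
  have hzero := hf.cycloid hy.1 hyz hz.2
  rw [hf.eq_zero (.inl (not_lt.1 h))] at hzero
  exact (hf.mem_Ioo hyz hz.2).1.ne hzero

theorem apply_le (hf : IsChainLOp n f) {x y : ℕ} (hy : y < n) : f x y ≤ y := by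
  rcases lt_or_ge x y with hxy | hyx
  · have := add_sub_le_of_strictMonoOn_Ioo (hf.strictMonoOn x)
      (fun z hz => (hf.mem_Ioo hz.1 hz.2).2) ⟨hxy, hy⟩
    omega
  · rw [hf.eq_zero (.inl hyx)]
    exact Nat.zero_le y

theorem cycloid_of_lt (hf : IsChainLOp n f) {x y z : ℕ} (hxy : x < y) (hy : y < n)
    (hz : z < n) : f (f x y) (f x z) = f (f y x) (f y z) := by
  rw [hf.eq_zero (.inl hxy.le), hf.zero_left ((hf.apply_le hz).trans_lt hz)]
  rcases lt_trichotomy y z with hyz | rfl | hzy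
  · exact hf.cycloid hxy hyz hz
  · rw [hf.eq_zero (.inl le_rfl), hf.eq_zero (.inl le_rfl)]
  · rw [hf.eq_zero (a := y) (.inl hzy.le)]
    refine hf.eq_zero (.inl ?_)
    rcases lt_or_ge x z with hxz | hzx
    · exact (hf.strictMonoOn x ⟨hxz, hz⟩ ⟨hxy, hy⟩ hzy).le
    · exact (hf.eq_zero (.inl hzx)).trans_le (Nat.zero_le _)

theorem apply_eq_self_of_le (hf : IsChainLOp n f) {x y z : ℕ} (hxy : x < y) (hyz : y ≤ z)
    (hz : z < n) (hfix : f x y = y) : f x z = z := by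
  induction z, hyz using Nat.le_induction with
  | base => exact hfix
  | succ z hyz ih =>
    have hlt : f x z < f x (z + 1) :=
      hf.strictMonoOn x ⟨by omega, by omega⟩ ⟨by omega, hz⟩ (Nat.lt_add_one z)
    have hle := hf.apply_le (x := x) hz
    have hself := ih (by omega)
    omega

theorem apply_lt_of_isGreatest (hf : IsChainLOp n f)
    (hm : IsGreatest (invariantIndices n f) m) {z : ℕ} (hmz : m < z) (hz : z < n) :
    f m z < z := by
  induction z using Nat.strong_induction_on with
  | _ z ih =>
  by_contra hnot
  have hfix : f m z = z := le_antisymm (hf.apply_le hz) (not_lt.1 hnot)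
  have z_invariant : ∀ y < z, f y z = z := by
    intro y
    induction y using Nat.strong_induction_on with
    | _ y ihy =>
    intro hyz
    rcases lt_trichotomy y m with hym | rfl | hmy
    · exact hf.apply_eq_self_of_le hym hmz.le hz (hm.1.2 y hym)
    · exact hfix
    · have hlt : f m y < y := ih y hyz hmy (hyz.trans hz)
      calc f y z = f (f m y) (f m z) := (hf.cycloid hmy hyz hz).symm
        _ = f (f m y) z := by rw [hfix]
        _ = z := ihy _ hlt (hlt.trans hyz)
  exact hmz.not_ge (hm.2 ⟨hz, z_invariant⟩)

theorem row_mem_admissibleRows (hf : IsChainLOp n f)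
    (hm : IsGreatest (invariantIndices n f) m) : f m ∈ admissibleRows n m := by
  refine ⟨by simpa only [Finset.coe_Ioo] using hf.strictMonoOn m, fun z hz => ?_, fun z hz => ?_⟩
  · rw [Finset.coe_Ioo] at hz ⊢
    have hlt := hf.apply_lt_of_isGreatest hm hz.1 hz.2
    exact ⟨(hf.mem_Ioo hz.1 hz.2).1, by have := hz.2; omega⟩
  · rw [Finset.mem_Ioo] at hz
    exact hf.eq_zero (by omega)

end IsChainLOp

theorem isChainLOp_one_iff {f : ℕ → ℕ → ℕ} : IsChainLOp 1 f ↔ f = 0 := by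
  constructor
  · intro hf
    funext a b
    exact hf.eq_zero (by omega)
  · rintro rfl
    exact ⟨fun _ => rfl, fun _ _ => by omega, fun hb => (Nat.lt_one_iff.1 hb).symm,
      fun _ _ _ => rfl⟩

/-- The restriction of a chain operation to the upper part `{0, …, m - 1}` of the chain. -/
def truncateLOp (m : ℕ) (f : ℕ → ℕ → ℕ) (a b : ℕ) : ℕ :=
  if b < m then f a b else 0

theorem isChainLOp_truncateLOp {n m : ℕ} {f : ℕ → ℕ → ℕ} (hf : IsChainLOp n f) (hmn : m ≤ n) :
    IsChainLOp m (truncateLOp m f) where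
  eq_zero {a b} h := by
    rw [truncateLOp, ite_eq_right_iff]
    exact fun hb => hf.eq_zero (by omega)
  mem_Ioo {a b} hab hb := by
    rw [truncateLOp, if_pos hb]
    exact ⟨(hf.mem_Ioo hab (by omega)).1, (hf.apply_le (by omega)).trans_lt hb⟩
  zero_left {b} hb := by
    rw [truncateLOp, if_pos hb, hf.zero_left (by omega)]
  cycloid {x y z} hxy hyz hz := by
    have hle : f x z ≤ z := hf.apply_le (by omega)
    simp only [truncateLOp, if_pos hz, if_pos (hyz.trans hz), if_pos (hle.trans_lt hz)]
    exact hf.cycloid hxy hyz (by omega)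

/-- The chain operation of length `n` assembled from an operation `A` on the indices less than `m`
and the row `g` of `m`. The rows of index less than `m` fix every `b ≥ m`; those of index greater
than `m` are forced by the cycloid equation `f a b = f (f m a) (f m b)`. The guard `g a < a`, which
holds for admissible rows `g`, makes the recursion well-founded. -/
def extendLOp (n m : ℕ) (A : ℕ → ℕ → ℕ) (g : ℕ → ℕ) (a b : ℕ) : ℕ :=
  if b ≤ a ∨ n ≤ b then 0
  else if a < m then if b < m then A a b else b
  else if a = m then g b
  else if g a < a then extendLOp n m A g (g a) (g b)
  else 0
termination_by a

section extendLOp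

variable {n m : ℕ} {A : ℕ → ℕ → ℕ} {g : ℕ → ℕ} {a b : ℕ}

theorem extendLOp_eq_zero (h : b ≤ a ∨ n ≤ b) : extendLOp n m A g a b = 0 := by
  rw [extendLOp, if_pos h]

theorem extendLOp_of_lt_of_lt (hab : a < b) (hbm : b < m) (hmn : m ≤ n) :
    extendLOp n m A g a b = A a b := by
  rw [extendLOp, if_neg (by omega), if_pos (by omega), if_pos hbm]

theorem extendLOp_of_lt_of_le (ham : a < m) (hmb : m ≤ b) (hb : b < n) :
    extendLOp n m A g a b = b := by
  rw [extendLOp, if_neg (by omega), if_pos ham, if_neg (by omega)]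

theorem extendLOp_self (hmb : m < b) (hb : b < n) : extendLOp n m A g m b = g b := by
  rw [extendLOp, if_neg (by omega), if_neg (by omega), if_pos rfl]

theorem extendLOp_of_gt (hg : g ∈ admissibleRows n m) (hma : m < a) (hab : a < b) (hb : b < n) :
    extendLOp n m A g a b = extendLOp n m A g (g a) (g b) := by
  rw [extendLOp, if_neg (by omega), if_neg (by omega), if_neg (by omega),
    if_pos (apply_lt_of_mem_admissibleRows hg hma (hab.trans hb))]

theorem truncateLOp_extendLOp (hA : IsChainLOp m A) (hmn : m ≤ n) :
    truncateLOp m (extendLOp n m A g) = A := by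
  funext a b
  rw [truncateLOp]
  split_ifs with hbm
  · rcases lt_or_ge a b with hab | hba
    · exact extendLOp_of_lt_of_lt hab hbm hmn
    · rw [extendLOp_eq_zero (.inl hba), hA.eq_zero (.inl hba)]
  · exact (hA.eq_zero (.inr (not_lt.1 hbm))).symm

theorem extendLOp_row (hg : g ∈ admissibleRows n m) : extendLOp n m A g m = g := by
  funext b
  by_cases hb : m < b ∧ b < n
  · exact extendLOp_self hb.1 hb.2
  · rw [extendLOp_eq_zero (by omega), hg.2.2 b (by rwa [Finset.mem_Ioo])]

theorem extendLOp_truncateLOp_row {f : ℕ → ℕ → ℕ} (hf : IsChainLOp n f)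
    (hm : IsGreatest (invariantIndices n f) m) :
    extendLOp n m (truncateLOp m f) (f m) = f := by
  have hmn : m < n := hm.1.1
  have hg := hf.row_mem_admissibleRows hm
  funext a
  induction a using Nat.strong_induction_on with
  | _ a ih =>
  funext b
  by_cases hzero : b ≤ a ∨ n ≤ b
  · rw [extendLOp_eq_zero hzero, hf.eq_zero hzero]
  obtain ⟨hab, hb⟩ : a < b ∧ b < n := by omega
  rcases lt_trichotomy a m with ham | rfl | hma
  · rcases lt_or_ge b m with hbm | hmb
    · rw [extendLOp_of_lt_of_lt hab hbm hmn.le, truncateLOp, if_pos hbm]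
    · rw [extendLOp_of_lt_of_le ham hmb hb, hf.apply_eq_self_of_le ham hmb hb (hm.1.2 a ham)]
  · exact extendLOp_self hab hb
  · rw [extendLOp_of_gt hg hma hab hb,
      ih _ (apply_lt_of_mem_admissibleRows hg hma (hab.trans hb)), hf.cycloid hma hab hb]

theorem extendLOp_mem_Ioo (hA : IsChainLOp m A) (hg : g ∈ admissibleRows n m) (hmn : m ≤ n)
    (hab : a < b) (hb : b < n) : extendLOp n m A g a b ∈ Set.Ioo 0 n := by
  induction a using Nat.strong_induction_on generalizing b with
  | _ a ih =>
  have row_mem (hmb : m < b) : g b ∈ Set.Ioo 0 (n - 1) := by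
    simpa only [Finset.coe_Ioo] using hg.2.1 (Finset.mem_Ioo.2 ⟨hmb, hb⟩)
  rcases lt_trichotomy a m with ham | rfl | hma
  · rcases lt_or_ge b m with hbm | hmb
    · rw [extendLOp_of_lt_of_lt hab hbm hmn]
      exact Set.Ioo_subset_Ioo_right hmn (hA.mem_Ioo hab hbm)
    · rw [extendLOp_of_lt_of_le ham hmb hb]
      exact ⟨by omega, hb⟩
  · rw [extendLOp_self hab hb]
    exact Set.Ioo_subset_Ioo_right (Nat.sub_le n 1) (row_mem hab)
  · rw [extendLOp_of_gt hg hma hab hb]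
    have hrow := row_mem (hma.trans hab)
    exact ih _ (apply_lt_of_mem_admissibleRows hg hma (hab.trans hb))
      (apply_lt_apply_of_mem_admissibleRows hg hma hab hb) (by have := hrow.2; omega)

theorem extendLOp_cycloid_of_lt (hA : IsChainLOp m A) (hmn : m ≤ n) {x y z : ℕ} (hxm : x < m)
    (hxy : x < y) (hyz : y < z) (hz : z < n) :
    extendLOp n m A g (extendLOp n m A g x y) (extendLOp n m A g x z) =
      extendLOp n m A g y z := by
  rcases lt_or_ge z m with hzm | hmz
  · have hlt : A x y < A x z := hA.strictMonoOn x ⟨hxy, hyz.trans hzm⟩ ⟨hxy.trans hyz, hzm⟩ hyz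
    have hle : A x z ≤ z := hA.apply_le hzm
    rw [extendLOp_of_lt_of_lt hxy (hyz.trans hzm) hmn,
      extendLOp_of_lt_of_lt (hxy.trans hyz) hzm hmn, extendLOp_of_lt_of_lt hyz hzm hmn,
      extendLOp_of_lt_of_lt hlt (hle.trans_lt hzm) hmn, hA.cycloid hxy hyz hzm]
  · rw [extendLOp_of_lt_of_le hxm hmz hz]
    rcases lt_or_ge y m with hym | hmy
    · have hle : A x y ≤ y := hA.apply_le hym
      rw [extendLOp_of_lt_of_lt hxy hym hmn, extendLOp_of_lt_of_le (hle.trans_lt hym) hmz hz,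
        extendLOp_of_lt_of_le hym hmz hz]
    · rw [extendLOp_of_lt_of_le hxm hmy (hyz.trans hz)]

theorem extendLOp_cycloid (hA : IsChainLOp m A) (hg : g ∈ admissibleRows n m) (hmn : m ≤ n)
    {x y z : ℕ} (hxy : x < y) (hyz : y < z) (hz : z < n) :
    extendLOp n m A g (extendLOp n m A g x y) (extendLOp n m A g x z) =
      extendLOp n m A g y z := by
  induction x using Nat.strong_induction_on generalizing y z with
  | _ x ih =>
  rcases lt_trichotomy x m with hxm | rfl | hmx
  · exact extendLOp_cycloid_of_lt hA hmn hxm hxy hyz hz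
  · rw [extendLOp_row hg, extendLOp_of_gt hg hxy hyz hz]
  · rw [extendLOp_of_gt hg hmx hxy (hyz.trans hz), extendLOp_of_gt hg hmx (hxy.trans hyz) hz,
      extendLOp_of_gt hg (hmx.trans hxy) hyz hz]
    have hgz : g z < z := apply_lt_of_mem_admissibleRows hg (hmx.trans (hxy.trans hyz)) hz
    exact ih _ (apply_lt_of_mem_admissibleRows hg hmx (hxy.trans (hyz.trans hz)))
      (apply_lt_apply_of_mem_admissibleRows hg hmx hxy (hyz.trans hz))
      (apply_lt_apply_of_mem_admissibleRows hg (hmx.trans hxy) hyz hz)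
      (hgz.trans hz)

theorem isChainLOp_extendLOp (hA : IsChainLOp m A) (hg : g ∈ admissibleRows n m) (hm : 0 < m)
    (hmn : m ≤ n) : IsChainLOp n (extendLOp n m A g) where
  eq_zero := extendLOp_eq_zero
  mem_Ioo := extendLOp_mem_Ioo hA hg hmn
  cycloid := extendLOp_cycloid hA hg hmn
  zero_left {b} hb := by
    rcases Nat.eq_zero_or_pos b with rfl | hpos
    · exact extendLOp_eq_zero (.inl le_rfl)
    rcases lt_or_ge b m with hbm | hmb
    · rw [extendLOp_of_lt_of_lt hpos hbm hmn, hA.zero_left hbm]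
    · exact extendLOp_of_lt_of_le hm hmb hb

theorem isGreatest_invariantIndices_extendLOp (hg : g ∈ admissibleRows n m) (hmn : m < n) :
    IsGreatest (invariantIndices n (extendLOp n m A g)) m := by
  refine ⟨⟨hmn, fun y hy => extendLOp_of_lt_of_le hy le_rfl hmn⟩, fun q ⟨hq, hinv⟩ => ?_⟩
  by_contra! hmq
  have hfix : g q = q := by rw [← extendLOp_self (A := A) (g := g) hmq hq, hinv m hmq]
  exact (apply_lt_of_mem_admissibleRows hg hmq hq).ne hfix

end extendLOp

/-- The extension of a binary operation on `Fin n` to `ℕ` by the junk value `0`. -/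
def finOpToNat {n : ℕ} (op : Fin n → Fin n → Fin n) (a b : ℕ) : ℕ :=
  if h : a < n ∧ b < n then op ⟨a, h.1⟩ ⟨b, h.2⟩ else 0

theorem finOpToNat_val {n : ℕ} (op : Fin n → Fin n → Fin n) (a b : Fin n) :
    finOpToNat op a b = op a b :=
  dif_pos ⟨a.2, b.2⟩

theorem finOpToNat_injective (n : ℕ) :
    Function.Injective (finOpToNat : (Fin n → Fin n → Fin n) → ℕ → ℕ → ℕ) := by
  intro op op' h
  funext a b
  rw [Fin.ext_iff, ← finOpToNat_val, ← finOpToNat_val, h]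

theorem chainLOps_subset_range_finOpToNat (n : ℕ) :
    chainLOps n ⊆ Set.range (finOpToNat : (Fin n → Fin n → Fin n) → ℕ → ℕ → ℕ) := by
  intro f hf
  have hlt (a b : Fin n) : f a b < n := (hf.apply_le b.2).trans_lt b.2
  refine ⟨fun a b => ⟨f a b, hlt a b⟩, ?_⟩
  funext a b
  by_cases h : a < n ∧ b < n
  · exact dif_pos h
  · exact (dif_neg h).trans (hf.eq_zero (by omega)).symm

theorem finite_chainLOps (n : ℕ) : (chainLOps n).Finite :=
  (Set.finite_range _).subset (chainLOps_subset_range_finOpToNat n)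

section Fin

variable {n : ℕ} {op : Fin n → Fin n → Fin n}

theorem isLAlgebra_of_isChainLOp (hn : 0 < n) (hf : IsChainLOp n (finOpToNat op)) :
    IsLAlgebra op ⟨0, hn⟩ ∧ ∀ a b : Fin n, op a b = ⟨0, hn⟩ ↔ b.val ≤ a.val := by
  have order (a b : Fin n) : op a b = ⟨0, hn⟩ ↔ b.val ≤ a.val := by
    rw [Fin.ext_iff, ← finOpToNat_val, ← Nat.not_lt, ← hf.pos_iff b.2, Nat.pos_iff_ne_zero, not_not]
  refine ⟨⟨fun x => ?_, fun x => (order _ _).2 (Nat.zero_le _), fun x => (order _ _).2 le_rfl,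
    fun x y z => ?_, fun x y hxy hyx => ?_⟩, order⟩
  · rw [Fin.ext_iff, ← finOpToNat_val]
    exact hf.zero_left x.2
  · simp only [Fin.ext_iff, ← finOpToNat_val]
    rcases lt_trichotomy x y with hxy | rfl | hyx
    · exact hf.cycloid_of_lt hxy y.2 z.2
    · rfl
    · exact (hf.cycloid_of_lt hyx x.2 z.2).symm
  · exact Fin.ext (le_antisymm ((order _ _).1 hyx) ((order _ _).1 hxy))

theorem IsLAlgebra.isChainLOp (hn : 0 < n) (hop : IsLAlgebra op ⟨0, hn⟩)
    (order : ∀ a b : Fin n, op a b = ⟨0, hn⟩ ↔ b.val ≤ a.val) :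
    IsChainLOp n (finOpToNat op) := by
  obtain ⟨unit_op, -, -, cycloid, -⟩ := hop
  refine ⟨fun {a b} h => ?_, fun {a b} hab hb => ?_, fun {b} hb => ?_,
    fun {x y z} hxy hyz hz => ?_⟩
  · rw [finOpToNat]
    split_ifs with hlt
    · rw [(order _ _).2 (show b ≤ a by omega)]
    · rfl
  · lift b to Fin n using hb
    lift a to Fin n using hab.trans b.2
    rw [finOpToNat_val]
    refine ⟨Nat.pos_of_ne_zero fun hzero => ?_, Fin.is_lt _⟩
    exact hab.not_ge ((order a b).1 (Fin.ext hzero))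
  · lift b to Fin n using hb
    exact (finOpToNat_val op ⟨0, hn⟩ b).trans (congrArg Fin.val (unit_op b))
  · lift z to Fin n using hz
    lift y to Fin n using hyz.trans z.2
    lift x to Fin n using hxy.trans y.2
    simp only [finOpToNat_val]
    rw [cycloid, (order y x).2 hxy.le, unit_op]

theorem isChainLOp_finOpToNat_iff (hn : 0 < n) :
    IsChainLOp n (finOpToNat op) ↔
      IsLAlgebra op ⟨0, hn⟩ ∧ ∀ a b : Fin n, op a b = ⟨0, hn⟩ ↔ b.val ≤ a.val :=
  ⟨isLAlgebra_of_isChainLOp hn, fun h => h.1.isChainLOp hn h.2⟩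

theorem val_mem_invariantIndices_finOpToNat_iff (q : Fin n) :
    q.val ∈ invariantIndices n (finOpToNat op) ↔ ∀ y : Fin n, y.val < q.val → op y q = q := by
  refine ⟨fun h y hy => Fin.ext ?_, fun h => ⟨q.2, fun y hy => ?_⟩⟩
  · rw [← finOpToNat_val, h.2 y hy]
  · lift y to Fin n using hy.trans q.2
    rw [finOpToNat_val, h y hy]

theorem isGreatest_invariantIndices_finOpToNat_iff {m : ℕ} (hm : m < n) :
    IsGreatest (invariantIndices n (finOpToNat op)) m ↔
      (∀ y : Fin n, y.val < m → op y ⟨m, hm⟩ = ⟨m, hm⟩) ∧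
        ∀ q : Fin n, (∀ y : Fin n, y.val < q.val → op y q = q) → q.val ≤ m := by
  refine and_congr (val_mem_invariantIndices_finOpToNat_iff ⟨m, hm⟩)
    ⟨fun h q hq => ?_, fun h q hq => ?_⟩
  · exact h ((val_mem_invariantIndices_finOpToNat_iff q).2 hq)
  · exact h ⟨q, hq.1⟩ ((val_mem_invariantIndices_finOpToNat_iff ⟨q, hq.1⟩).1 hq)

end Fin

section Counting

theorem bijOn_truncateLOp_row {n m : ℕ} (hm : 0 < m) (hmn : m < n) :
    Set.BijOn (fun f => (truncateLOp m f, f m)) (chainLOpsWithInvariant n m)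
      (chainLOps m ×ˢ admissibleRows n m) := by
  refine Set.InvOn.bijOn (f' := fun p => extendLOp n m p.1 p.2) ⟨?_, ?_⟩ ?_ ?_
  · rintro f ⟨hf, hgreatest⟩
    exact extendLOp_truncateLOp_row hf hgreatest
  · rintro ⟨A, g⟩ ⟨hA, hg⟩
    exact Prod.ext (truncateLOp_extendLOp hA hmn.le) (extendLOp_row hg)
  · rintro f ⟨hf, hgreatest⟩
    exact ⟨isChainLOp_truncateLOp hf hmn.le, hf.row_mem_admissibleRows hgreatest⟩
  · rintro ⟨A, g⟩ ⟨hA, hg⟩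
    exact ⟨isChainLOp_extendLOp hA hg hm hmn.le, isGreatest_invariantIndices_extendLOp hg hmn⟩

theorem ncard_chainLOpsWithInvariant {n m : ℕ} (hmn : m ≤ n) :
    (chainLOpsWithInvariant (n + 2) (m + 1)).ncard =
      n.choose m * (chainLOps (m + 1)).ncard := by
  rw [(bijOn_truncateLOp_row m.succ_pos (by omega)).ncard_eq, Set.ncard_prod,
    ncard_strictMonoMaps, Nat.card_Ioo, Nat.card_Ioo, mul_comm, ← Nat.choose_symm hmn]
  congr 2
  omega

theorem chainLOps_eq_biUnion (n : ℕ) :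
    chainLOps (n + 2) = ⋃ m ∈ Finset.range (n + 1), chainLOpsWithInvariant (n + 2) (m + 1) := by
  ext f
  simp only [Set.mem_iUnion, Finset.mem_range]
  refine ⟨fun hf => ?_, fun ⟨_, _, hf⟩ => hf.1⟩
  have one_mem : 1 ∈ invariantIndices (n + 2) f := by
    refine ⟨by omega, fun y hy => ?_⟩
    rw [Nat.lt_one_iff.1 hy, hf.zero_left (by omega)]
  have bddAbove : BddAbove (invariantIndices (n + 2) f) := ⟨n + 2, fun q hq => hq.1.le⟩
  have isGreatest : IsGreatest (invariantIndices (n + 2) f) (sSup (invariantIndices (n + 2) f)) :=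
    ⟨Nat.sSup_mem ⟨1, one_mem⟩ bddAbove, fun q hq => le_csSup bddAbove hq⟩
  obtain ⟨m, hm⟩ := Nat.exists_eq_succ_of_ne_zero
    (Nat.one_le_iff_ne_zero.1 (isGreatest.2 one_mem))
  rw [hm] at isGreatest
  exact ⟨m, by have := isGreatest.1.1; omega, hf, isGreatest⟩

theorem ncard_chainLOps_eq_sum (n : ℕ) :
    (chainLOps (n + 2)).ncard =
      ∑ m ∈ Finset.range (n + 1), n.choose m * (chainLOps (m + 1)).ncard := by
  have disjoint : (Finset.range (n + 1) : Set ℕ).PairwiseDisjoint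
      fun m => chainLOpsWithInvariant (n + 2) (m + 1) := by
    intro m _ m' _ hne
    refine Set.disjoint_left.2 fun f hf hf' => hne ?_
    exact Nat.succ_injective (hf.2.unique hf'.2)
  have finite (m : ℕ) : (chainLOpsWithInvariant (n + 2) (m + 1)).Finite :=
    (finite_chainLOps _).subset fun f hf => hf.1
  rw [chainLOps_eq_biUnion]
  refine ((Finset.finite_toSet _).ncard_biUnion (fun m _ => finite m) disjoint).trans ?_
  rw [finsum_mem_coe_finset]
  exact Finset.sum_congr rfl fun m hm =>
    ncard_chainLOpsWithInvariant (Finset.mem_range_succ_iff.1 hm)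

theorem ncard_chainLOps (n : ℕ) : (chainLOps (n + 1)).ncard = n.bell := by
  induction n using Nat.strong_induction_on with
  | _ n ih =>
  rcases n with _ | n
  · have : chainLOps 1 = {0} := Set.ext fun f => isChainLOp_one_iff
    rw [this, Set.ncard_singleton, Nat.bell_zero]
  · rw [ncard_chainLOps_eq_sum, bell_succ_eq_sum_range]
    exact Finset.sum_congr rfl fun m hm => by rw [ih m (Finset.mem_range.1 hm)]

end Counting

/-- The chain `Lₙ = {x₀ > x₁ > … > x_{n-1}}` is modelled by `Fin n`, where index `i`
stands for `xᵢ`; thus `xᵢ ≤ xⱼ` iff `j ≤ i`, the logical unit is `x₀`, and the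
natural order condition reads `op a b = x₀ ↔ b.val ≤ a.val`.

For `n ≥ 2` and `1 ≤ m ≤ n - 1`, the number of L-algebra structures on the chain
`Fin n` (with natural order equal to this total order and logical unit `x₀`) whose
smallest invariant element is `x_m` (i.e. `x_m` is invariant and every invariant
element `q` satisfies `q ≥ x_m`, that is `q.val ≤ m`) equals
`binom(n-2, m-1) · B(m-1)`, where the Bell number `B(k)` is the number of
equivalence relations (`Setoid`s) on a `k`-element set. -/
theorem num_linear_L_algebras_with_smallest_invariant
    (n m : ℕ) (hn : 2 ≤ n) (hm1 : 1 ≤ m) (hm2 : m ≤ n - 1) :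
    Nat.card {op : Fin n → Fin n → Fin n //
      IsLAlgebra op ⟨0, by omega⟩ ∧
      (∀ a b : Fin n, op a b = ⟨0, by omega⟩ ↔ b.val ≤ a.val) ∧
      (∀ y : Fin n, y.val < m → op y ⟨m, by omega⟩ = ⟨m, by omega⟩) ∧
      (∀ q : Fin n, (∀ y : Fin n, y.val < q.val → op y q = q) → q.val ≤ m)} =
    (n - 2).choose (m - 1) * Nat.card (Setoid (Fin (m - 1))) := by
  obtain ⟨n, rfl⟩ := Nat.exists_eq_add_of_le' hn
  obtain ⟨m, rfl⟩ := Nat.exists_eq_add_of_le' hm1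
  rw [Nat.add_sub_cancel, Nat.add_sub_cancel, card_setoid_fin, ← ncard_chainLOps,
    ← ncard_chainLOpsWithInvariant (by omega),
    ← Set.ncard_preimage_of_injective_subset_range (finOpToNat_injective (n + 2))
      fun f hf => chainLOps_subset_range_finOpToNat _ hf.1,
    ← Nat.card_coe_set_eq]
  refine Nat.card_congr (Equiv.subtypeEquivRight fun op => ?_)
  rw [← and_assoc, ← isChainLOp_finOpToNat_iff (by omega),
    ← isGreatest_invariantIndices_finOpToNat_iff (by omega)]
  rfl
end
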